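/- Let γ be a real number with 0 < γ < 1, let r_l ≤ r_u be real numbers satisfying γ · r_u < r_l, and let K ≤ 0. Then for any two sequences (a_n)_{n≥0} and (b_n)_{n≥0} of real numbers all of whose terms lie in the interval [r_l, r_u], the penalized discounted return K + γ · ∑_{n=0}^{∞} γ^n a_n is strictly less than the unpenalized discounted return ∑_{n=0}^{∞} γ^n b_n. (This is the core comparison underlying the paper's lemma that, in the penalty-augmented MDP with self-loop penalty K < 0 on infeasible actions, the Q-value of any feasible action strictly exceeds that of any infeasible action whenever the per-step reward is bounded in [r_l, r_u] with r_u < r_l/γ.) -/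

import Mathlib

/-! Compare both series termwise with a geometric series: among rewards in `[l, u]`, the penalized
return is largest for the constant sequence `u`, with value `K + γ * u / (1 - γ)`, and the
unpenalized return is smallest for the constant sequence `l`, with value `l / (1 - γ)`.
Clearing the denominator, the strict inequality between these two extremes is
`(1 - γ) * K + γ * u < l`. -/

section WeightedSum

variable {ι R : Type*}

theorem summable_mul_of_norm_le [NonUnitalSeminormedRing R] [CompleteSpace R] {w c : ι → R} {C : ℝ}
    (hw : Summable fun i => ‖w i‖) (hc : ∀ i, ‖c i‖ ≤ C) : Summable fun i => w i * c i :=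
  .of_norm_bounded (hw.mul_right C) fun i => norm_mul_le_of_le le_rfl (hc i)

variable [Semiring R] [PartialOrder R] [IsOrderedRing R] [TopologicalSpace R]
  [IsTopologicalSemiring R] [OrderClosedTopology R] {w c : ι → R} {W S : R}

theorem hasSum_mul_le_of_forall_le {u : R} (hw_nonneg : ∀ i, 0 ≤ w i) (hw : HasSum w W)
    (hS : HasSum (fun i => w i * c i) S) (hc : ∀ i, c i ≤ u) : S ≤ W * u :=
  hasSum_le (fun i => mul_le_mul_of_nonneg_left (hc i) (hw_nonneg i)) hS (hw.mul_right u)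

theorem le_hasSum_mul_of_forall_le {l : R} (hw_nonneg : ∀ i, 0 ≤ w i) (hw : HasSum w W)
    (hS : HasSum (fun i => w i * c i) S) (hc : ∀ i, l ≤ c i) : W * l ≤ S :=
  hasSum_le (fun i => mul_le_mul_of_nonneg_left (hc i) (hw_nonneg i)) (hw.mul_right l) hS

end WeightedSum

theorem summable_pow_mul_of_mem_Icc {γ l u : ℝ} (hγ : |γ| < 1) {c : ℕ → ℝ}
    (hc : ∀ n, c n ∈ Set.Icc l u) : Summable fun n => γ ^ n * c n :=
  summable_mul_of_norm_le (summable_geometric_of_abs_lt_one hγ).norm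
    fun n => abs_le_max_abs_abs (hc n).1 (hc n).2

theorem penalized_return_lt_unpenalized_return_general {γ l u K : ℝ} (hγ0 : 0 ≤ γ) (hγ1 : γ < 1)
    (hgap : (1 - γ) * K + γ * u < l) {a b : ℕ → ℝ}
    (ha : Summable fun n => γ ^ n * a n) (hau : ∀ n, a n ≤ u)
    (hb : Summable fun n => γ ^ n * b n) (hlb : ∀ n, l ≤ b n) :
    K + γ * (∑' n, γ ^ n * a n) < ∑' n, γ ^ n * b n := by
  have hpow : ∀ n, 0 ≤ γ ^ n := pow_nonneg hγ0
  have hgeom : HasSum (fun n => γ ^ n) (1 - γ)⁻¹ := hasSum_geometric_of_lt_one hγ0 hγ1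
  have hpos : 0 < 1 - γ := sub_pos.mpr hγ1
  calc K + γ * (∑' n, γ ^ n * a n)
      ≤ K + γ * ((1 - γ)⁻¹ * u) := by
        gcongr
        exact hasSum_mul_le_of_forall_le hpow hgeom ha.hasSum hau
    _ = (1 - γ)⁻¹ * ((1 - γ) * K + γ * u) := by field
    _ < (1 - γ)⁻¹ * l := by gcongr
    _ ≤ ∑' n, γ ^ n * b n := le_hasSum_mul_of_forall_le hpow hgeom hb.hasSum hlb

theorem penalized_return_lt_unpenalized_return
    (γ r_l r_u K : ℝ) (hγ0 : 0 < γ) (hγ1 : γ < 1)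
    (hlu : r_l ≤ r_u) (hgap : γ * r_u < r_l) (hK : K ≤ 0)
    (a b : ℕ → ℝ)
    (ha : ∀ n, a n ∈ Set.Icc r_l r_u) (hb : ∀ n, b n ∈ Set.Icc r_l r_u) :
    K + γ * (∑' n : ℕ, γ ^ n * a n) < ∑' n : ℕ, γ ^ n * b n := by
  have hγ : |γ| < 1 := by rwa [abs_of_pos hγ0]
  have hpenalty : (1 - γ) * K ≤ 0 := mul_nonpos_of_nonneg_of_nonpos (sub_nonneg.mpr hγ1.le) hK
  exact penalized_return_lt_unpenalized_return_general hγ0.le hγ1 (by linarith)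
    (summable_pow_mul_of_mem_Icc hγ ha) (fun n => (ha n).2)
    (summable_pow_mul_of_mem_Icc hγ hb) (fun n => (hb n).1)
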